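/- For all Z, W ∈ f0, the sum over k = 1, 2, 3 and over all e ∈ 𝒟k of B([Z,e],[W,e]) equals B(Z,W). -/

import Mathlib

/-! An element of `f0` is `√(−1)` times a real diagonal matrix with entries `z_k`, and for such a
matrix `[Z, e]` has entries `√(−1)(z_a − z_b) e_ab`. Both `Ã_ij` and `B̃_ij` are supported on the
positions `(i,j)` and `(j,i)`, with `e_ij e_ji = -1/(4N)`, so each contributes exactly
`(z_i − z_j)(w_i − w_j)` to the sum (`Bform_bracket`). As `z` and `w` are constant on blocks, the
sum is `2∑ (block size)(block size)(z_p − z_q)(w_p − w_q)` over the three pairs of blocks, and since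
the weighted sums `ℓz₁ + mz₂ + nz₃` and `ℓw₁ + mw₂ + nw₃` vanish this is
`2N(ℓz₁w₁ + mz₂w₂ + nz₃w₃)`, which is `B(Z,W)`. -/

open Matrix

noncomputable section

/-- `B(X,Y) = −2N·Re(tr(XY))`, the negative of the Killing form of `su(N)`. -/
def Bform (N : ℕ) (X Y : Matrix (Fin N) (Fin N) ℂ) : ℝ :=
  -(2 * (N : ℝ)) * ((X * Y).trace).re

/-- The elementary matrix `E_ij` (natural-number indices; zero if out of range). -/
def Eij (N i j : ℕ) : Matrix (Fin N) (Fin N) ℂ :=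
  Matrix.of fun a b => if (a : ℕ) = i ∧ (b : ℕ) = j then 1 else 0

/-- `A_ij = E_ij − E_ji`. -/
def Amat (N i j : ℕ) : Matrix (Fin N) (Fin N) ℂ := Eij N i j - Eij N j i

/-- `B_ij = √(−1)·(E_ij + E_ji)`. -/
def Bmat (N i j : ℕ) : Matrix (Fin N) (Fin N) ℂ := Complex.I • (Eij N i j + Eij N j i)

/-- `Ã_ij = A_ij/(2√N)`. -/
def tA (N i j : ℕ) : Matrix (Fin N) (Fin N) ℂ :=
  (((2 * Real.sqrt N : ℝ) : ℂ))⁻¹ • Amat N i j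

/-- `B̃_ij = B_ij/(2√N)`. -/
def tB (N i j : ℕ) : Matrix (Fin N) (Fin N) ℂ :=
  (((2 * Real.sqrt N : ℝ) : ℂ))⁻¹ • Bmat N i j

/-- The member of a family `𝒟k` labelled by a pair of indices and a Boolean choosing
between `Ã_ij` (`true`) and `B̃_ij` (`false`). -/
def Dmem (N : ℕ) (p : ℕ × ℕ × Bool) : Matrix (Fin N) (Fin N) ℂ :=
  if p.2.2 then tA N p.1 p.2.1 else tB N p.1 p.2.1

/-- Index set of the family `𝒟1` (zero-based indices: `ℓ ≤ i < ℓ+m`, `0 ≤ j < ℓ`). -/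
def idx1 (l m n : ℕ) : Finset (ℕ × ℕ × Bool) :=
  (Finset.Ico l (l + m)) ×ˢ (Finset.range l) ×ˢ (Finset.univ : Finset Bool)

/-- Index set of the family `𝒟2` (`ℓ+m ≤ i < N`, `0 ≤ j < ℓ`). -/
def idx2 (l m n : ℕ) : Finset (ℕ × ℕ × Bool) :=
  (Finset.Ico (l + m) (l + m + n)) ×ˢ (Finset.range l) ×ˢ (Finset.univ : Finset Bool)

/-- Index set of the family `𝒟3` (`ℓ+m ≤ i < N`, `ℓ ≤ j < ℓ+m`). -/
def idx3 (l m n : ℕ) : Finset (ℕ × ℕ × Bool) :=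
  (Finset.Ico (l + m) (l + m + n)) ×ˢ (Finset.Ico l (l + m)) ×ˢ (Finset.univ : Finset Bool)

/-- `Z4 = √(−1)·diag((1/(ℓ+m))I_{ℓ+m}, −(1/n)I_n)`. -/
def Z4mat (l m n : ℕ) : Matrix (Fin (l + m + n)) (Fin (l + m + n)) ℂ :=
  Matrix.of fun a b => if a = b then
    (if (a : ℕ) < l + m then Complex.I / ((l + m : ℕ) : ℂ) else -Complex.I / (n : ℂ)) else 0

/-- `Z5 = √(−1)·diag((1/ℓ)I_ℓ, −(1/m)I_m, 0·I_n)`. -/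
def Z5mat (l m n : ℕ) : Matrix (Fin (l + m + n)) (Fin (l + m + n)) ℂ :=
  Matrix.of fun a b => if a = b then
    (if (a : ℕ) < l then Complex.I / (l : ℂ)
      else if (a : ℕ) < l + m then -Complex.I / (m : ℂ) else 0) else 0

/-- `c4 = √((ℓ+m)n)/(√2·N)`. -/
def c4 (l m n : ℕ) : ℝ :=
  Real.sqrt (((l : ℝ) + m) * n) / (Real.sqrt 2 * ((l : ℝ) + m + n))

/-- `c5 = √(ℓm)/(√(2N)·√(ℓ+m))`. -/
def c5 (l m n : ℕ) : ℝ :=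
  Real.sqrt ((l : ℝ) * m) / (Real.sqrt (2 * ((l : ℝ) + m + n)) * Real.sqrt ((l : ℝ) + m))

/-- `Z̃4 = c4·Z4`. -/
def tZ4 (l m n : ℕ) : Matrix (Fin (l + m + n)) (Fin (l + m + n)) ℂ :=
  ((c4 l m n : ℝ) : ℂ) • Z4mat l m n

/-- `Z̃5 = c5·Z5`. -/
def tZ5 (l m n : ℕ) : Matrix (Fin (l + m + n)) (Fin (l + m + n)) ℂ :=
  ((c5 l m n : ℝ) : ℂ) • Z5mat l m n

/-- The element `√(−1)·diag((a1/ℓ)I_ℓ, (a2/m)I_m, (a3/n)I_n)` of the abelian part `f0`. -/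
def f0mat (l m n : ℕ) (a1 a2 a3 : ℝ) : Matrix (Fin (l + m + n)) (Fin (l + m + n)) ℂ :=
  Matrix.of fun a b => if a = b then
    (if (a : ℕ) < l then Complex.I * (a1 : ℂ) / (l : ℂ)
      else if (a : ℕ) < l + m then Complex.I * (a2 : ℂ) / (m : ℂ)
      else Complex.I * (a3 : ℂ) / (n : ℂ)) else 0

/-- The skew-Hermitian diagonal matrix with entries `√(−1)·z k` for a real sequence `z`. -/
def iDiag (N : ℕ) (z : ℕ → ℝ) : Matrix (Fin N) (Fin N) ℂ :=
  Matrix.diagonal fun k => Complex.I * (z k : ℂ)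

/-- The common value `a_p / (block size)` on each of the three blocks. -/
def blockVal (l m n : ℕ) (a1 a2 a3 : ℝ) (k : ℕ) : ℝ :=
  if k < l then a1 / l else if k < l + m then a2 / m else a3 / n

lemma f0mat_eq (l m n : ℕ) (a1 a2 a3 : ℝ) :
    f0mat l m n a1 a2 a3 = iDiag (l + m + n) (blockVal l m n a1 a2 a3) := by
  ext a b
  simp only [f0mat, iDiag, blockVal, Matrix.of_apply, Matrix.diagonal_apply]
  split_ifs <;> push_cast <;> ring

lemma Eij_eq_single {N : ℕ} (i j : Fin N) : Eij N i j = Matrix.single i j 1 := by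
  ext a b
  simp [Eij, Matrix.single_apply, Fin.ext_iff, eq_comm]

lemma iDiag_bracket (N : ℕ) (z : ℕ → ℝ) (e : Matrix (Fin N) (Fin N) ℂ) (a b : Fin N) :
    (⁅iDiag N z, e⁆ : Matrix (Fin N) (Fin N) ℂ) a b
      = Complex.I * ((z a : ℂ) - z b) * e a b := by
  simp only [iDiag, Ring.lie_def, Matrix.sub_apply, Matrix.diagonal_mul, Matrix.mul_diagonal]
  ring

lemma Dmem_mul_Dmem {N : ℕ} {i j : Fin N} (hij : i ≠ j) (t : Bool) (a b : Fin N) :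
    Dmem N (i, j, t) a b * Dmem N (i, j, t) b a
      = if (a = i ∧ b = j) ∨ (a = j ∧ b = i) then -((4 * (N : ℂ))⁻¹) else 0 := by
  have hs : ((Real.sqrt N : ℝ) : ℂ)⁻¹ * ((Real.sqrt N : ℝ) : ℂ)⁻¹ = (N : ℂ)⁻¹ := by
    rw [← mul_inv, ← Complex.ofReal_mul, Real.mul_self_sqrt (Nat.cast_nonneg N)]
    simp
  have hI := Complex.I_mul_I
  have key : ∀ x y : ℂ, ((2 * Real.sqrt N : ℝ) : ℂ)⁻¹ * x * (((2 * Real.sqrt N : ℝ) : ℂ)⁻¹ * y)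
      = (4 * (N : ℂ))⁻¹ * (x * y) := by
    intro x y
    push_cast
    rw [mul_inv, mul_inv, ← hs]
    ring
  cases t <;>
    simp only [Dmem, tA, tB, Amat, Bmat, Eij_eq_single, if_true, Bool.false_eq_true, if_false,
      Matrix.smul_apply, Matrix.sub_apply, Matrix.add_apply, Matrix.single_apply, smul_eq_mul, key]
  all_goals
    by_cases h1 : a = i <;> by_cases h2 : b = j <;> by_cases h3 : a = j <;>
      by_cases h4 : b = i <;> subst_vars <;> simp_all [eq_comm]

/-- Each normalised root vector contributes `(z_i − z_j)(w_i − w_j)`, for both Boolean labels. -/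
lemma Bform_bracket {N : ℕ} (z w : ℕ → ℝ) {i j : ℕ} (hi : i < N) (hj : j < N) (hij : i ≠ j)
    (t : Bool) :
    Bform N ⁅iDiag N z, Dmem N (i, j, t)⁆ ⁅iDiag N w, Dmem N (i, j, t)⁆
      = (z i - z j) * (w i - w j) := by
  lift i to Fin N using hi
  lift j to Fin N using hj
  have hij' : i ≠ j := fun h => hij (by rw [h])
  have hN : (N : ℂ) ≠ 0 := by
    have := i.pos
    exact_mod_cast this.ne'
  have hNr : (N : ℝ) ≠ 0 := by exact_mod_cast hN
  have h : ∀ a b : Fin N,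
      (⁅iDiag N z, Dmem N (i, j, t)⁆ : Matrix (Fin N) (Fin N) ℂ) a b
        * (⁅iDiag N w, Dmem N (i, j, t)⁆ : Matrix (Fin N) (Fin N) ℂ) b a
      = (if a = i then if b = j then -((4 * (N : ℂ))⁻¹) * ((z i - z j) * (w i - w j)) else 0 else 0)
        + (if a = j then if b = i then
            -((4 * (N : ℂ))⁻¹) * ((z i - z j) * (w i - w j)) else 0 else 0) := by
    intro a b
    rw [iDiag_bracket, iDiag_bracket]
    have e := Dmem_mul_Dmem hij' t a b
    -- The product of the two factors `√(−1)` cancels the sign of `(w_b − w_a)`.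
    have : Complex.I * ((z a : ℂ) - z b) * Dmem N (i, j, t) a b
        * (Complex.I * ((w b : ℂ) - w a) * Dmem N (i, j, t) b a)
        = ((z a : ℂ) - z b) * (w a - w b)
          * (Dmem N (i, j, t) a b * Dmem N (i, j, t) b a) := by
      linear_combination ((z a : ℂ) - z b) * (w b - w a)
          * (Dmem N (i, j, t) a b * Dmem N (i, j, t) b a) * Complex.I_mul_I
    rw [this, e]
    by_cases h1 : a = i <;> by_cases h2 : b = j <;> by_cases h3 : a = j <;>
      by_cases h4 : b = i <;> subst_vars <;> simp_all <;> ring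
  have ht : ((⁅iDiag N z, Dmem N (i, j, t)⁆ : Matrix (Fin N) (Fin N) ℂ)
      * ⁅iDiag N w, Dmem N (i, j, t)⁆).trace
      = ((-(2 * (N : ℝ))⁻¹ * ((z i - z j) * (w i - w j)) : ℝ) : ℂ) := by
    simp only [Matrix.trace, Matrix.diag_apply, Matrix.mul_apply, h, Finset.sum_add_distrib]
    simp only [Finset.sum_ite_irrel, Finset.sum_const_zero, Finset.sum_ite_eq',
      Finset.mem_univ, if_true]
    push_cast
    field_simp
    ring
  rw [Bform, ht, Complex.ofReal_re]
  field_simp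

lemma Bform_iDiag (N : ℕ) (z w : ℕ → ℝ) :
    Bform N (iDiag N z) (iDiag N w) = 2 * N * ∑ k ∈ Finset.range N, z k * w k := by
  have h : ∀ k : ℕ, Complex.I * (z k : ℂ) * (Complex.I * (w k : ℂ))
      = ((-(z k * w k) : ℝ) : ℂ) := by
    intro k
    push_cast
    linear_combination (z k : ℂ) * w k * Complex.I_mul_I
  rw [Bform, iDiag, iDiag, Matrix.diagonal_mul_diagonal, Matrix.trace_diagonal]
  simp only [h]
  rw [← Complex.ofReal_sum, Complex.ofReal_re,
    Fin.sum_univ_eq_sum_range (fun k => -(z k * w k)) N, Finset.sum_neg_distrib]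
  ring

/-- The contribution of a pair of disjoint index blocks on which `z` and `w` are constant. -/
lemma sum_block {N : ℕ} (z w : ℕ → ℝ) (S T : Finset ℕ) (x x' y y' : ℝ)
    (hS : ∀ i ∈ S, i < N ∧ z i = x ∧ w i = y) (hT : ∀ j ∈ T, j < N ∧ z j = x' ∧ w j = y')
    (hST : Disjoint S T) :
    ∑ p ∈ S ×ˢ T ×ˢ (Finset.univ : Finset Bool),
      Bform N ⁅iDiag N z, Dmem N p⁆ ⁅iDiag N w, Dmem N p⁆
      = 2 * S.card * T.card * ((x - x') * (y - y')) := by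
  have h : ∀ p ∈ S ×ˢ T ×ˢ (Finset.univ : Finset Bool),
      Bform N ⁅iDiag N z, Dmem N p⁆ ⁅iDiag N w, Dmem N p⁆ = (x - x') * (y - y') := by
    rintro ⟨i, j, t⟩ hp
    simp only [Finset.mem_product] at hp
    obtain ⟨hi, hzi, hwi⟩ := hS i hp.1
    obtain ⟨hj, hzj, hwj⟩ := hT j hp.2.1
    rw [Bform_bracket z w hi hj (Finset.disjoint_left.1 hST hp.1 |> fun h e => h (e ▸ hp.2.1)),
      hzi, hwi, hzj, hwj]
  rw [Finset.sum_congr rfl h, Finset.sum_const, Finset.card_product, Finset.card_product,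
    nsmul_eq_mul]
  simp only [Finset.card_univ, Fintype.card_bool]
  push_cast
  ring

/-- For all `Z, W ∈ f0`, the sum over `k = 1,2,3` and all `e ∈ 𝒟k` of `B([Z,e],[W,e])`
equals `B(Z,W)`. -/
theorem sum_brackets_eq_B (l m n : ℕ) (hl : 0 < l) (hm : 0 < m) (hn : 0 < n)
    (a1 a2 a3 b1 b2 b3 : ℝ) (ha : a1 + a2 + a3 = 0) (hb : b1 + b2 + b3 = 0) :
    let N := l + m + n
    let Z := f0mat l m n a1 a2 a3
    let W := f0mat l m n b1 b2 b3
    (∑ p ∈ idx1 l m n, Bform N ⁅Z, Dmem N p⁆ ⁅W, Dmem N p⁆)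
      + (∑ p ∈ idx2 l m n, Bform N ⁅Z, Dmem N p⁆ ⁅W, Dmem N p⁆)
      + (∑ p ∈ idx3 l m n, Bform N ⁅Z, Dmem N p⁆ ⁅W, Dmem N p⁆) = Bform N Z W := by
  intro N Z W
  have hl' : (l : ℝ) ≠ 0 := by exact_mod_cast hl.ne'
  have hm' : (m : ℝ) ≠ 0 := by exact_mod_cast hm.ne'
  have hn' : (n : ℝ) ≠ 0 := by exact_mod_cast hn.ne'
  have v1 : ∀ c1 c2 c3 : ℝ, ∀ i, i < l → blockVal l m n c1 c2 c3 i = c1 / l := by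
    intro c1 c2 c3 i hi
    simp [blockVal, hi]
  have v2 : ∀ c1 c2 c3 : ℝ, ∀ i, l ≤ i → i < l + m → blockVal l m n c1 c2 c3 i = c2 / m := by
    intro c1 c2 c3 i hi hi'
    simp [blockVal, hi', not_lt.2 hi]
  have v3 : ∀ c1 c2 c3 : ℝ, ∀ i, l + m ≤ i → blockVal l m n c1 c2 c3 i = c3 / n := by
    intro c1 c2 c3 i hi
    have h1 : ¬ i < l := by omega
    have h2 : ¬ i < l + m := by omega
    simp [blockVal, h1, h2]
  have m1 : ∀ i ∈ Finset.range l, i < N ∧ blockVal l m n a1 a2 a3 i = a1 / l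
      ∧ blockVal l m n b1 b2 b3 i = b1 / l := by
    intro i hi
    rw [Finset.mem_range] at hi
    exact ⟨by omega, v1 _ _ _ i hi, v1 _ _ _ i hi⟩
  have m2 : ∀ i ∈ Finset.Ico l (l + m), i < N ∧ blockVal l m n a1 a2 a3 i = a2 / m
      ∧ blockVal l m n b1 b2 b3 i = b2 / m := by
    intro i hi
    rw [Finset.mem_Ico] at hi
    exact ⟨by omega, v2 _ _ _ i hi.1 hi.2, v2 _ _ _ i hi.1 hi.2⟩
  have m3 : ∀ i ∈ Finset.Ico (l + m) (l + m + n), i < N ∧ blockVal l m n a1 a2 a3 i = a3 / n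
      ∧ blockVal l m n b1 b2 b3 i = b3 / n := by
    intro i hi
    rw [Finset.mem_Ico] at hi
    exact ⟨hi.2, v3 _ _ _ i hi.1, v3 _ _ _ i hi.1⟩
  have d1 : Disjoint (Finset.Ico l (l + m)) (Finset.range l) := by
    rw [Finset.disjoint_left]
    intro i
    simp only [Finset.mem_Ico, Finset.mem_range]
    omega
  have d2 : Disjoint (Finset.Ico (l + m) (l + m + n)) (Finset.range l) := by
    rw [Finset.disjoint_left]
    intro i
    simp only [Finset.mem_Ico, Finset.mem_range]
    omega
  have d3 : Disjoint (Finset.Ico (l + m) (l + m + n)) (Finset.Ico l (l + m)) := by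
    rw [Finset.disjoint_left]
    intro i
    simp only [Finset.mem_Ico]
    omega
  have hsum : ∑ k ∈ Finset.range N, blockVal l m n a1 a2 a3 k * blockVal l m n b1 b2 b3 k
      = l * (a1 / l * (b1 / l)) + m * (a2 / m * (b2 / m)) + n * (a3 / n * (b3 / n)) := by
    rw [← Finset.sum_range_add_sum_Ico _ (show l + m ≤ N by omega),
      ← Finset.sum_range_add_sum_Ico _ (show l ≤ l + m by omega)]
    congr 1
    · congr 1
      · rw [Finset.sum_congr rfl (fun i hi => by rw [(m1 i hi).2.1, (m1 i hi).2.2])]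
        simp
      · rw [Finset.sum_congr rfl (fun i hi => by rw [(m2 i hi).2.1, (m2 i hi).2.2])]
        simp
    · rw [Finset.sum_congr rfl (fun i hi => by rw [(m3 i hi).2.1, (m3 i hi).2.2])]
      simp [N]
  simp only [Z, W, f0mat_eq, idx1, idx2, idx3]
  rw [sum_block _ _ _ _ _ _ _ _ m2 m1 d1, sum_block _ _ _ _ _ _ _ _ m3 m1 d2,
    sum_block _ _ _ _ _ _ _ _ m3 m2 d3, Bform_iDiag, hsum]
  simp only [Nat.card_Ico, Finset.card_range, Nat.add_sub_cancel_left, N]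
  push_cast
  obtain rfl : a3 = -a1 - a2 := by linarith
  obtain rfl : b3 = -b1 - b2 := by linarith
  field_simp
  ring
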